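/- Let G be a second-countable Lie group, let H = PSL(2,ℝ) × G, and let Γ be a discrete subgroup of H such that the quotient space Γ\H of left cosets is compact and the image of Γ under the projection H → G is dense in G (this density is equivalent to the minimality of the associated homogeneous G-Lie foliation). Then the foliated horocycle flow on Γ\H, given by right translation h_s(Γ(x,k)) = Γ(x·u(s), k), is strictly ergodic: every orbit is dense in Γ\H, and there is exactly one Borel probability measure on Γ\H invariant under this flow. -/

import Mathlib

/-!
Statement 0: For a second-countable Lie group `G`, `H = PSL(2,ℝ) × G` and a discrete
subgroup `Γ ≤ H` with compact quotient `Γ\H` and dense projection to `G`, the foliated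
horocycle flow `h_s(Γ(x,k)) = Γ(x·u(s),k)` on the right coset space `Γ\H` is strictly
ergodic: every orbit is dense, and there is exactly one invariant Borel probability
measure.
-/

open MeasureTheory QuotientGroup Matrix

abbrev SL2R := Matrix.SpecialLinearGroup (Fin 2) ℝ

noncomputable instance : TopologicalSpace SL2R :=
  inferInstanceAs (TopologicalSpace { A : Matrix (Fin 2) (Fin 2) ℝ // A.det = 1 })

/-- `PSL(2,ℝ)`, the quotient of `SL(2,ℝ)` by its center `{±I}`. -/
abbrev PSL2R := SL2R ⧸ Subgroup.center SL2R

/-- The unipotent element `u(s) = [[1,s],[0,1]]` of `SL(2,ℝ)`. -/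
noncomputable def uSL (s : ℝ) : SL2R :=
  ⟨!![1, s; 0, 1], by simp [Matrix.det_fin_two_of]⟩

/-- The class of `u(s)` in `PSL(2,ℝ)`. -/
noncomputable def uPSL (s : ℝ) : PSL2R := QuotientGroup.mk (uSL s)

/-- Right translation by `g` on the space `Γ\H` of right cosets `Γx`. -/
def rightMulQuot {H : Type*} [Group H] (Γ : Subgroup H) (g : H) :
    Quotient (QuotientGroup.rightRel Γ) → Quotient (QuotientGroup.rightRel Γ) :=
  Quotient.map (· * g) (fun a b hab => by
    have h : b * a⁻¹ ∈ Γ := QuotientGroup.rightRel_apply.mp hab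
    exact QuotientGroup.rightRel_apply.mpr (by simpa [mul_assoc] using h))

/-- The Borel σ-algebra on the coset space `Γ\H`. -/
noncomputable instance {H : Type*} [Group H] [TopologicalSpace H] (Γ : Subgroup H) :
    MeasurableSpace (Quotient (QuotientGroup.rightRel Γ)) := borel _

/-!
The geodesic flow stretches horocycle arcs, so an average of a continuous function `f` over a long
horocycle arc is a geodesic translate of its average over a unit arc. By the Gauss decomposition
such averages change little under small elements of `SL(2,ℝ)`, and under small elements of the
second factor because it commutes with `SL(2,ℝ)`; since these two groups move a point onto a
neighbourhood of it, the averages form an equicontinuous family. With respect to the invariant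
probability measure, doubling the length of an arc decreases the `L²` norm of the average, and by
the parallelogram law the defect measures the failure of invariance under a unipotent element.
Hence every uniform limit of the averages is unipotent invariant, thus `SL(2,ℝ)`-invariant by the
Mautner phenomenon, thus constant because density of the projection of `Γ` to the second factor
makes the action of `SL(2,ℝ)` on `Γ\H` minimal. The averages therefore converge uniformly to the
mean of `f`, which gives both unique ergodicity and density of all orbits.
-/

namespace Horocycle

open Filter Topology Set

section Matrices

/-- The lower triangular unipotent element `[[1,0],[c,1]]` of `SL(2,ℝ)`. -/
noncomputable def vSL (c : ℝ) : SL2R :=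
  ⟨!![1, 0; c, 1], by simp [Matrix.det_fin_two_of]⟩

/-- The diagonal element `diag(e^{t/2}, e^{-t/2})` of `SL(2,ℝ)`, which generates the geodesic
flow. -/
noncomputable def dSL (t : ℝ) : SL2R :=
  ⟨!![Real.exp (t / 2), 0; 0, Real.exp (-(t / 2))], by
    simp [Matrix.det_fin_two_of, ← Real.exp_add]⟩

lemma SL2R_ext {g h : SL2R} (h00 : g 0 0 = h 0 0) (h01 : g 0 1 = h 0 1) (h10 : g 1 0 = h 1 0)
    (h11 : g 1 1 = h 1 1) : g = h := by
  ext i j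
  fin_cases i <;> fin_cases j <;> assumption

lemma SL2R_mul_apply (g h : SL2R) (i j : Fin 2) :
    (g * h) i j = g i 0 * h 0 j + g i 1 * h 1 j := by
  simp [Matrix.mul_apply, Fin.sum_univ_two]

@[simp] lemma uSL_apply_zero_zero (s : ℝ) : uSL s 0 0 = 1 := rfl
@[simp] lemma uSL_apply_zero_one (s : ℝ) : uSL s 0 1 = s := rfl
@[simp] lemma uSL_apply_one_zero (s : ℝ) : uSL s 1 0 = 0 := rfl
@[simp] lemma uSL_apply_one_one (s : ℝ) : uSL s 1 1 = 1 := rfl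
@[simp] lemma vSL_apply_zero_zero (c : ℝ) : vSL c 0 0 = 1 := rfl
@[simp] lemma vSL_apply_zero_one (c : ℝ) : vSL c 0 1 = 0 := rfl
@[simp] lemma vSL_apply_one_zero (c : ℝ) : vSL c 1 0 = c := rfl
@[simp] lemma vSL_apply_one_one (c : ℝ) : vSL c 1 1 = 1 := rfl
@[simp] lemma dSL_apply_zero_zero (t : ℝ) : dSL t 0 0 = Real.exp (t / 2) := rfl
@[simp] lemma dSL_apply_zero_one (t : ℝ) : dSL t 0 1 = 0 := rfl
@[simp] lemma dSL_apply_one_zero (t : ℝ) : dSL t 1 0 = 0 := rfl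
@[simp] lemma dSL_apply_one_one (t : ℝ) : dSL t 1 1 = Real.exp (-(t / 2)) := rfl

lemma uSL_zero : uSL 0 = 1 := by
  apply SL2R_ext <;> simp

lemma uSL_add (s r : ℝ) : uSL (s + r) = uSL s * uSL r := by
  apply SL2R_ext <;> simp [SL2R_mul_apply, add_comm]

lemma uSL_natCast (n : ℕ) : uSL n = uSL 1 ^ n := by
  induction n with
  | zero => simp [uSL_zero]
  | succ n ih => rw [Nat.cast_succ, uSL_add, ih, pow_succ]

lemma uSL_neg (s : ℝ) : uSL (-s) = (uSL s)⁻¹ :=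
  eq_inv_of_mul_eq_one_left (by rw [← uSL_add, neg_add_cancel, uSL_zero])

lemma vSL_zero : vSL 0 = 1 := by
  apply SL2R_ext <;> simp

lemma dSL_zero : dSL 0 = 1 := by
  apply SL2R_ext <;> simp

lemma dSL_add (t s : ℝ) : dSL (t + s) = dSL t * dSL s := by
  apply SL2R_ext <;> simp [SL2R_mul_apply, ← Real.exp_add] <;> ring

lemma dSL_neg (t : ℝ) : dSL (-t) = (dSL t)⁻¹ :=
  eq_inv_of_mul_eq_one_left (by rw [← dSL_add, neg_add_cancel, dSL_zero])

lemma dSL_nsmul (n : ℕ) (t : ℝ) : dSL (n * t) = dSL t ^ n := by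
  induction n with
  | zero => simp [dSL_zero]
  | succ n ih => rw [Nat.cast_succ, add_one_mul, dSL_add, ih, pow_succ]

lemma dSL_mul_uSL (t s : ℝ) : dSL t * uSL s = uSL (Real.exp t * s) * dSL t := by
  have h : Real.exp (t / 2) = Real.exp t * Real.exp (-(t / 2)) := by
    rw [← Real.exp_add]; ring_nf
  apply SL2R_ext <;> simp [SL2R_mul_apply, h, mul_right_comm]

lemma vSL_mul_dSL (c t : ℝ) : vSL c * dSL t = dSL t * vSL (Real.exp t * c) := by
  have h : Real.exp (t / 2) = Real.exp t * Real.exp (-(t / 2)) := by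
    rw [← Real.exp_add]; ring_nf
  apply SL2R_ext <;> simp [SL2R_mul_apply, h]; ring

lemma SL2R_det (g : SL2R) : g 0 0 * g 1 1 - g 0 1 * g 1 0 = 1 := by
  rw [← Matrix.det_fin_two, g.det_coe]

/-- The Gauss decomposition of a matrix with positive lower right entry. -/
lemma eq_uSL_mul_dSL_mul_vSL {g : SL2R} (hg : 0 < g 1 1) :
    g = uSL (g 0 1 / g 1 1) * dSL (-2 * Real.log (g 1 1)) * vSL (g 1 0 / g 1 1) := by
  have hdet := SL2R_det g
  have h1 : Real.exp (-2 * Real.log (g 1 1) / 2) = (g 1 1)⁻¹ := by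
    rw [neg_mul, neg_div, mul_div_cancel_left₀ _ two_ne_zero, Real.exp_neg, Real.exp_log hg]
  have h2 : Real.exp (-(-2 * Real.log (g 1 1) / 2)) = g 1 1 := by
    rw [Real.exp_neg, h1, inv_inv]
  apply SL2R_ext <;> simp only [SL2R_mul_apply, uSL_apply_zero_zero, uSL_apply_zero_one,
    uSL_apply_one_zero, uSL_apply_one_one, dSL_apply_zero_zero, dSL_apply_zero_one,
    dSL_apply_one_zero, dSL_apply_one_one, vSL_apply_zero_zero, vSL_apply_zero_one,
    vSL_apply_one_zero, vSL_apply_one_one, h1, h2]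
  · field_simp
    linear_combination hdet
  all_goals field_simp; ring

lemma mem_of_forall_uSL_mem_of_forall_vSL_mem {S : Subgroup SL2R} (hu : ∀ s, uSL s ∈ S)
    (hv : ∀ c, vSL c ∈ S) (g : SL2R) : g ∈ S := by
  refine Matrix.SL2.transvection_induction (· ∈ S) (fun i j hij c => ?_)
    (fun _ _ => S.mul_mem) g
  fin_cases i <;> fin_cases j
  · exact absurd rfl hij
  · convert hu c
    apply SL2R_ext <;> simp [SpecialLinearGroup.transvection_coe]
  · convert hv c
    apply SL2R_ext <;> simp [SpecialLinearGroup.transvection_coe]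
  · exact absurd rfl hij

-- The topology on `SL2R` is Mathlib's, but only up to unfolding its instance, so instance search
-- does not see this.
instance : IsTopologicalGroup SL2R := Matrix.SpecialLinearGroup.topologicalGroup

lemma isClosedEmbedding_coe_SL2R :
    IsClosedEmbedding ((↑) : SL2R → Matrix (Fin 2) (Fin 2) ℝ) :=
  Matrix.SpecialLinearGroup.isClosedEmbedding_val

instance : T2Space SL2R :=
  isClosedEmbedding_coe_SL2R.isEmbedding.t2Space

instance : SecondCountableTopology SL2R :=
  haveI : SecondCountableTopology (Matrix (Fin 2) (Fin 2) ℝ) :=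
    inferInstanceAs (SecondCountableTopology (Fin 2 → Fin 2 → ℝ))
  isClosedEmbedding_coe_SL2R.isEmbedding.secondCountableTopology

instance : LocallyCompactSpace SL2R :=
  haveI : LocallyCompactSpace (Matrix (Fin 2) (Fin 2) ℝ) :=
    inferInstanceAs (LocallyCompactSpace (Fin 2 → Fin 2 → ℝ))
  isClosedEmbedding_coe_SL2R.locallyCompactSpace

lemma continuous_SL2R_iff {Y : Type*} [TopologicalSpace Y] {f : Y → SL2R} :
    Continuous f ↔ ∀ i j, Continuous fun y => f y i j :=
  isClosedEmbedding_coe_SL2R.isEmbedding.continuous_iff.trans <|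
    continuous_pi_iff.trans <| forall_congr' fun _ => continuous_pi_iff

@[fun_prop]
lemma continuous_uSL : Continuous uSL :=
  continuous_SL2R_iff.2 <| Fin.forall_fin_two.2 ⟨Fin.forall_fin_two.2
    ⟨continuous_const, continuous_id⟩, Fin.forall_fin_two.2 ⟨continuous_const, continuous_const⟩⟩

@[fun_prop]
lemma continuous_vSL : Continuous vSL :=
  continuous_SL2R_iff.2 <| Fin.forall_fin_two.2 ⟨Fin.forall_fin_two.2
    ⟨continuous_const, continuous_const⟩, Fin.forall_fin_two.2 ⟨continuous_id, continuous_const⟩⟩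

@[fun_prop]
lemma continuous_dSL : Continuous dSL :=
  continuous_SL2R_iff.2 <| Fin.forall_fin_two.2 ⟨Fin.forall_fin_two.2
    ⟨Real.continuous_exp.comp (continuous_id.div_const 2), continuous_const⟩,
    Fin.forall_fin_two.2 ⟨continuous_const,
      Real.continuous_exp.comp (continuous_id.div_const 2).neg⟩⟩

end Matrices

section Mautner

lemma smul_eq_self_of_tendsto {L Y ι : Type*} [Group L] [TopologicalSpace L] [MetricSpace Y]
    [MulAction L Y] [IsIsometricSMul L Y] [ContinuousSMul L Y] {y : Y} {l : Filter ι} [l.NeBot]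
    {a x b : ι → L} {g : L} (ha : ∀ i, a i • y = y) (hb : ∀ i, b i • y = y)
    (hx : Tendsto x l (𝓝 1)) (hg : Tendsto (fun i => a i * x i * b i) l (𝓝 g)) : g • y = y := by
  have hdist (i : ι) : dist ((a i * x i * b i) • y) y = dist (x i • y) y := by
    rw [mul_smul, hb, mul_smul]
    nth_rw 2 [← ha i]
    exact dist_smul ..
  have hlim : Tendsto (fun i => dist ((a i * x i * b i) • y) y) l (𝓝 0) := by
    simp only [hdist]
    have := (hx.smul_const y).dist (tendsto_const_nhds (x := y))
    rwa [one_smul, dist_self] at this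
  exact dist_eq_zero.1 <|
    tendsto_nhds_unique ((hg.smul_const y).dist tendsto_const_nhds) hlim

lemma vSL_mul_uSL_eq {x : ℝ} (hx : 0 < x) :
    vSL (1 / (2 * x)) * uSL (2 * x) =
      uSL x * (dSL (-2 * Real.log 2) * vSL (1 / (4 * x))) := by
  have h01 : (vSL (1 / (2 * x)) * uSL (2 * x)) 0 1 = 2 * x := by
    simp [SL2R_mul_apply]
  have h10 : (vSL (1 / (2 * x)) * uSL (2 * x)) 1 0 = 1 / (2 * x) := by
    simp [SL2R_mul_apply]
  have h11 : (vSL (1 / (2 * x)) * uSL (2 * x)) 1 1 = 2 := by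
    simp only [SL2R_mul_apply, vSL_apply_one_zero, uSL_apply_zero_one, vSL_apply_one_one,
      uSL_apply_one_one]
    field_simp
    norm_num
  have h := eq_uSL_mul_dSL_mul_vSL (h11 ▸ two_pos)
  rwa [h01, h10, h11, mul_div_cancel_left₀ _ two_ne_zero, div_div, mul_right_comm,
    show (2 : ℝ) * 2 = 4 by norm_num, mul_assoc] at h

variable {Y : Type*} [MetricSpace Y] [MulAction SL2R Y] [IsIsometricSMul SL2R Y]
  [ContinuousSMul SL2R Y] {y : Y}

lemma dSL_neg_two_mul_log_two_smul_eq_self (hy : uSL 1 • y = y) :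
    dSL (-2 * Real.log 2) • y = y := by
  have hu (n : ℕ) : uSL n ∈ MulAction.stabilizer SL2R y := uSL_natCast n ▸ pow_mem hy n
  have hv (c : ℝ) : Tendsto (fun n : ℕ => vSL (1 / (c * (n + 1 : ℕ)))) atTop (𝓝 1) := by
    have h0 : Tendsto (fun n : ℕ => 1 / (c * (n + 1 : ℕ))) atTop (𝓝 0) := by
      simpa [mul_comm c⁻¹] using tendsto_one_div_add_atTop_nhds_zero_nat.mul_const c⁻¹
    exact vSL_zero ▸ (continuous_vSL.tendsto 0).comp h0
  refine smul_eq_self_of_tendsto (a := fun n : ℕ => (uSL (n + 1 : ℕ))⁻¹)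
    (b := fun n : ℕ => uSL (2 * (n + 1 : ℕ))) (fun n => inv_mem (hu _)) (fun n => ?_) (hv 2) ?_
  · exact_mod_cast hu (2 * (n + 1))
  · have h (n : ℕ) := vSL_mul_uSL_eq (x := (n + 1 : ℕ)) (by positivity)
    simp only [mul_assoc, h, inv_mul_cancel_left]
    simpa using (hv 4).const_mul (dSL (-2 * Real.log 2))

/-- The Mautner phenomenon for isometric actions of `SL(2,ℝ)`. -/
theorem smul_eq_self_of_uSL_one_smul_eq_self (hy : uSL 1 • y = y) (g : SL2R) :
    g • y = y := by
  have hd (n : ℕ) : dSL (n * (-2 * Real.log 2)) ∈ MulAction.stabilizer SL2R y :=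
    dSL_nsmul n _ ▸ pow_mem (dSL_neg_two_mul_log_two_smul_eq_self hy) n
  have hlim (c : ℝ) :
      Tendsto (fun n : ℕ => Real.exp (n * (-2 * Real.log 2)) * c) atTop (𝓝 0) := by
    have hlog : -2 * Real.log 2 < 0 := by linarith [Real.log_pos one_lt_two]
    have := (Real.tendsto_exp_atBot.comp
      (tendsto_natCast_atTop_atTop.atTop_mul_const_of_neg hlog)).mul_const c
    simpa using this
  refine mem_of_forall_uSL_mem_of_forall_vSL_mem (S := MulAction.stabilizer SL2R y)
    (fun s => ?_) (fun c => ?_) g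
  · refine smul_eq_self_of_tendsto (fun n => inv_mem (hd n)) hd
      (uSL_zero ▸ (continuous_uSL.tendsto 0).comp (hlim s))
      (tendsto_const_nhds.congr fun n => ?_)
    rw [Function.comp_apply, mul_assoc, ← dSL_mul_uSL, inv_mul_cancel_left]
  · refine smul_eq_self_of_tendsto hd (fun n => inv_mem (hd n))
      (vSL_zero ▸ (continuous_vSL.tendsto 0).comp (hlim c))
      (tendsto_const_nhds.congr fun n => ?_)
    rw [Function.comp_apply, ← vSL_mul_dSL, mul_inv_cancel_right]

end Mautner

section ArcAverages

lemma norm_isometric_smul {L V : Type*} [Group L] [NormedAddCommGroup V]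
    [DistribMulAction L V] [IsIsometricSMul L V]
    (g : L) (v : V) : ‖g • v‖ = ‖v‖ := by
  simpa using dist_smul g v 0

lemma continuous_uSL_mul_smul {Y : Type*} [TopologicalSpace Y] [MulAction SL2R Y]
    [ContinuousSMul SL2R Y] (g : SL2R) (y : Y) : Continuous fun s => (uSL s * g) • y := by
  fun_prop

lemma mul_uSL_mul_dSL {g : SL2R} {s : ℝ} (hs : 0 < g 1 0 * s + g 1 1) (t : ℝ) :
    g * (uSL s * dSL (-t)) =
      uSL ((g 0 0 * s + g 0 1) / (g 1 0 * s + g 1 1)) * dSL (-t) *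
        (dSL (-2 * Real.log (g 1 0 * s + g 1 1)) *
          vSL (Real.exp (-t) * (g 1 0 / (g 1 0 * s + g 1 1)))) := by
  have h01 : (g * uSL s) 0 1 = g 0 0 * s + g 0 1 := by simp [SL2R_mul_apply]
  have h10 : (g * uSL s) 1 0 = g 1 0 := by simp [SL2R_mul_apply]
  have h11 : (g * uSL s) 1 1 = g 1 0 * s + g 1 1 := by simp [SL2R_mul_apply]
  have h := eq_uSL_mul_dSL_mul_vSL (h11 ▸ hs)
  rw [h01, h10, h11] at h
  rw [← mul_assoc, h, mul_assoc, vSL_mul_dSL, ← mul_assoc, mul_assoc (uSL _), ← dSL_add,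
    add_comm (-2 * Real.log _), dSL_add]
  simp only [mul_assoc]

lemma eventually_forall_mobius_close {η : ℝ} (hη : 0 < η) :
    ∀ᶠ g : SL2R in 𝓝 1, ∀ s ∈ Icc (0 : ℝ) 1, 0 < g 1 0 * s + g 1 1 ∧
      |1 - 1 / (g 1 0 * s + g 1 1) ^ 2| < η ∧
      |(g 0 0 * s + g 0 1) / (g 1 0 * s + g 1 1) - s| < η := by
  refine isCompact_Icc.eventually_forall_of_forall_eventually fun s _ => ?_
  have hden : Continuous fun z : SL2R × ℝ => z.1 1 0 * z.2 + z.1 1 1 := by fun_prop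
  have hsq : ContinuousAt (fun z : SL2R × ℝ => |1 - 1 / (z.1 1 0 * z.2 + z.1 1 1) ^ 2|) (1, s) := by
    fun_prop (disch := simp)
  have hmob : ContinuousAt (fun z : SL2R × ℝ =>
      |(z.1 0 0 * z.2 + z.1 0 1) / (z.1 1 0 * z.2 + z.1 1 1) - z.2|) (1, s) := by
    fun_prop (disch := simp)
  exact (hden.continuousAt.eventually_const_lt (by simp)).and
    ((hsq.eventually_lt_const (by simpa)).and (hmob.eventually_lt_const (by simpa)))

lemma eventually_forall_dist_dSL_mul_vSL_smul_lt {Y : Type*} [PseudoMetricSpace Y]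
    [MulAction SL2R Y] [ContinuousSMul SL2R Y] (y : Y) {ε : ℝ} (hε : 0 < ε) :
    ∀ᶠ g : SL2R in 𝓝 1, ∀ z ∈ Icc (0 : ℝ) 1 ×ˢ Icc (0 : ℝ) 1,
      dist ((dSL (-2 * Real.log (g 1 0 * z.1 + g 1 1)) *
        vSL (z.2 * (g 1 0 / (g 1 0 * z.1 + g 1 1)))) • y) y < ε := by
  refine (isCompact_Icc.prod isCompact_Icc).eventually_forall_of_forall_eventually fun z _ => ?_
  have hcont : ContinuousAt (fun w : SL2R × ℝ × ℝ =>
      dist ((dSL (-2 * Real.log (w.1 1 0 * w.2.1 + w.1 1 1)) *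
        vSL (w.2.2 * (w.1 1 0 / (w.1 1 0 * w.2.1 + w.1 1 1)))) • y) y) (1, z) := by
    fun_prop (disch := simp)
  exact hcont.eventually_lt_const (by simpa [dSL_zero, vSL_zero])

lemma hasDerivAt_mobius (g : SL2R) {s : ℝ} (hs : g 1 0 * s + g 1 1 ≠ 0) :
    HasDerivAt (fun s => (g 0 0 * s + g 0 1) / (g 1 0 * s + g 1 1))
      (1 / (g 1 0 * s + g 1 1) ^ 2) s := by
  have h (i : Fin 2) : HasDerivAt (fun s => g i 0 * s + g i 1) (g i 0) s := by
    simpa using ((hasDerivAt_id s).const_mul (g i 0)).add_const (g i 1)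
  refine ((h 0).div (h 1) hs).congr_deriv ?_
  congr 1
  linear_combination SL2R_det g

variable {V : Type*} [NormedAddCommGroup V] [NormedSpace ℝ V]

lemma norm_integral_comp_sub_integral_le {φ : ℝ → V} {σ σ' : ℝ → ℝ} {a b C η : ℝ}
    (hφ : Continuous φ) (hC : ∀ s, ‖φ s‖ ≤ C)
    (hσ : ∀ s ∈ uIcc a b, HasDerivAt σ (σ' s) s) (hσ' : ContinuousOn σ' (uIcc a b))
    (hη : ∀ s ∈ uIcc a b, |1 - σ' s| ≤ η) (ha : |a - σ a| ≤ η) (hb : |σ b - b| ≤ η) :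
    ‖(∫ s in a..b, φ (σ s)) - ∫ s in a..b, φ s‖ ≤ C * η * |b - a| + C * η + C * η := by
  have hC0 : 0 ≤ C := (norm_nonneg _).trans (hC 0)
  have hσc : ContinuousOn σ (uIcc a b) := fun s hs => (hσ s hs).continuousAt.continuousWithinAt
  have hφσ : ContinuousOn (fun s => φ (σ s)) (uIcc a b) := hφ.comp_continuousOn hσc
  have hsub : ∫ s in a..b, σ' s • φ (σ s) = ∫ s in σ a..σ b, φ s :=
    intervalIntegral.integral_deriv_smul_comp hσ hσ' hφ
  have hderiv : ‖(∫ s in a..b, φ (σ s)) - ∫ s in a..b, σ' s • φ (σ s)‖ ≤ C * η * |b - a| := by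
    rw [← intervalIntegral.integral_sub hφσ.intervalIntegrable
      (hσ'.fun_smul hφσ).intervalIntegrable]
    refine intervalIntegral.norm_integral_le_of_norm_le_const fun s hs => ?_
    calc ‖φ (σ s) - σ' s • φ (σ s)‖ = |1 - σ' s| * ‖φ (σ s)‖ := by
          rw [← Real.norm_eq_abs, ← norm_smul, sub_smul, one_smul]
      _ ≤ C * η := by
          rw [mul_comm]
          exact mul_le_mul (hC _) (hη s (uIoc_subset_uIcc hs)) (abs_nonneg _) hC0
  have hshort {x y : ℝ} (hxy : |y - x| ≤ η) : ‖∫ s in x..y, φ s‖ ≤ C * η :=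
    (intervalIntegral.norm_integral_le_of_norm_le_const fun s _ => hC s).trans
      (mul_le_mul_of_nonneg_left hxy hC0)
  have hint (x y : ℝ) : IntervalIntegrable φ volume x y := hφ.intervalIntegrable x y
  have hends : (∫ s in σ a..σ b, φ s) - ∫ s in a..b, φ s =
      (∫ s in σ a..a, φ s) + ∫ s in b..σ b, φ s := by
    rw [← intervalIntegral.integral_add_adjacent_intervals (hint _ b) (hint b _),
      ← intervalIntegral.integral_add_adjacent_intervals (hint _ a) (hint a b)]
    abel
  calc _ = ‖((∫ s in a..b, φ (σ s)) - ∫ s in a..b, σ' s • φ (σ s)) +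
        (∫ s in σ a..a, φ s) + ∫ s in b..σ b, φ s‖ := by
        rw [add_assoc, ← hends, ← hsub, sub_add_sub_cancel]
    _ ≤ _ := norm_add₃_le.trans (add_le_add_three hderiv (hshort ha) (hshort hb))

lemma smul_intervalIntegral {L : Type*} [Group L] [DistribMulAction L V] [SMulCommClass L ℝ V]
    [ContinuousConstSMul L V] (g : L) (f : ℝ → V) (a b : ℝ) :
    g • ∫ s in a..b, f s = ∫ s in a..b, g • f s := by
  have h (μ : Measure ℝ) : g • ∫ s, f s ∂μ = ∫ s, g • f s ∂μ :=
    ((ContinuousLinearEquiv.smulLeft g : V ≃L[ℝ] V).integral_comp_comm f).symm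
  simp only [intervalIntegral, smul_sub, h]

variable [DistribMulAction SL2R V]

/-- The average of the vectors `g • v` over the horocycle arc `g = u(s) D(-t)`, `0 ≤ s ≤ 1`. As
`u(s) D(-t) = D(-t) u(exp t * s)`, it is the translate by `D(-t)` of an average over an arc of
length `exp t`. -/
noncomputable def arcAverage (t : ℝ) (v : V) : V :=
  ∫ s in (0 : ℝ)..1, (uSL s * dSL (-t)) • v

lemma smul_arcAverage {L : Type*} [Group L] [DistribMulAction L V] [SMulCommClass L ℝ V]
    [ContinuousConstSMul L V] [SMulCommClass L SL2R V] (k : L) (t : ℝ) (v : V) :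
    k • arcAverage t v = arcAverage t (k • v) := by
  simp only [arcAverage, smul_intervalIntegral, smul_comm k]

lemma norm_arcAverage_le [IsIsometricSMul SL2R V] (t : ℝ) (v : V) : ‖arcAverage t v‖ ≤ ‖v‖ := by
  have h := intervalIntegral.norm_integral_le_of_norm_le_const (a := 0) (b := 1)
    (f := fun s => (uSL s * dSL (-t)) • v) (C := ‖v‖) fun s _ => (norm_isometric_smul _ v).le
  simpa [arcAverage] using h

variable [ContinuousSMul SL2R V]

lemma arcAverage_sub (t : ℝ) (v w : V) :
    arcAverage t (v - w) = arcAverage t v - arcAverage t w := by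
  simp only [arcAverage, smul_sub]
  exact intervalIntegral.integral_sub
    ((continuous_uSL_mul_smul _ v).intervalIntegrable ..)
    ((continuous_uSL_mul_smul _ w).intervalIntegrable ..)

lemma dSL_smul_arcAverage [SMulCommClass SL2R ℝ V] (t : ℝ) (v : V) :
    dSL t • arcAverage t v = ∫ s in (0 : ℝ)..1, uSL (Real.exp t * s) • v := by
  simp only [arcAverage, smul_intervalIntegral, smul_smul, ← mul_assoc, dSL_mul_uSL]
  simp only [dSL_neg, mul_inv_cancel_right]

lemma arcAverage_add_log_two [SMulCommClass SL2R ℝ V] (t : ℝ) (v : V) :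
    arcAverage (t + Real.log 2) v =
      dSL (-Real.log 2) • (2⁻¹ : ℝ) • (arcAverage t v + uSL 1 • arcAverage t v) := by
  have hmul (s : ℝ) : dSL (Real.log 2) * (uSL s * dSL (-(t + Real.log 2))) =
      uSL (2 * s) * dSL (-t) := by
    rw [← mul_assoc, dSL_mul_uSL, Real.exp_log two_pos, mul_assoc, ← dSL_add]
    ring_nf
  have hint (a b : ℝ) : IntervalIntegrable (fun s => (uSL s * dSL (-t)) • v) volume a b :=
    (continuous_uSL_mul_smul _ v).intervalIntegrable a b
  have hshift : uSL 1 • arcAverage t v = ∫ s in (1 : ℝ)..2, (uSL s * dSL (-t)) • v := by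
    simp only [arcAverage, smul_intervalIntegral, smul_smul, ← mul_assoc, ← uSL_add]
    rw [intervalIntegral.integral_comp_add_left (fun s => (uSL s * dSL (-t)) • v)]
    norm_num
  rw [dSL_neg, eq_inv_smul_iff, hshift]
  simp only [arcAverage]
  rw [intervalIntegral.integral_add_adjacent_intervals (hint 0 1) (hint 1 2),
    smul_intervalIntegral]
  simp only [smul_smul, hmul]
  rw [intervalIntegral.integral_comp_mul_left (fun s => (uSL s * dSL (-t)) • v) two_ne_zero]
  norm_num

variable [IsIsometricSMul SL2R V] {g : SL2R}

lemma norm_integral_mobius_sub_arcAverage_le {η : ℝ} (t : ℝ) (v : V)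
    (hmob : ∀ s ∈ Icc (0 : ℝ) 1, 0 < g 1 0 * s + g 1 1 ∧
      |1 - 1 / (g 1 0 * s + g 1 1) ^ 2| < η ∧
      |(g 0 0 * s + g 0 1) / (g 1 0 * s + g 1 1) - s| < η) :
    ‖(∫ s in (0 : ℝ)..1, (uSL ((g 0 0 * s + g 0 1) / (g 1 0 * s + g 1 1)) * dSL (-t)) • v) -
      arcAverage t v‖ ≤ 3 * ‖v‖ * η := by
  have hne : ∀ s ∈ uIcc (0 : ℝ) 1, g 1 0 * s + g 1 1 ≠ 0 := fun s hs =>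
    (hmob s (by simpa using hs)).1.ne'
  have hderiv : ContinuousOn (fun s => 1 / (g 1 0 * s + g 1 1) ^ 2) (uIcc 0 1) :=
    ContinuousOn.div₀ (by fun_prop) (by fun_prop) fun s hs => pow_ne_zero 2 (hne s hs)
  refine (norm_integral_comp_sub_integral_le (continuous_uSL_mul_smul (dSL (-t)) v)
    (fun s => (norm_isometric_smul _ v).le) (fun s hs => hasDerivAt_mobius g (hne s hs)) hderiv
    (fun s hs => (hmob s (by simpa using hs)).2.1.le)
    (by simpa [abs_sub_comm] using (hmob 0 (by simp)).2.2.le) (hmob 1 (by simp)).2.2.le).trans_eq ?_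
  rw [sub_zero, abs_one]
  ring

variable [SMulCommClass SL2R ℝ V]

lemma norm_smul_arcAverage_sub_integral_mobius_le {t ε : ℝ} {v : V}
    (hpos : ∀ s ∈ Icc (0 : ℝ) 1, 0 < g 1 0 * s + g 1 1)
    (hε : ∀ s ∈ Icc (0 : ℝ) 1, dist ((dSL (-2 * Real.log (g 1 0 * s + g 1 1)) *
      vSL (Real.exp (-t) * (g 1 0 / (g 1 0 * s + g 1 1)))) • v) v ≤ ε) :
    ‖g • arcAverage t v - ∫ s in (0 : ℝ)..1,
      (uSL ((g 0 0 * s + g 0 1) / (g 1 0 * s + g 1 1)) * dSL (-t)) • v‖ ≤ ε := by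
  have hφ := continuous_uSL_mul_smul (dSL (-t)) v
  have hgφ : Continuous fun s => g • (uSL s * dSL (-t)) • v := hφ.const_smul g
  rw [← uIcc_of_le zero_le_one] at hpos hε
  have hφσ : ContinuousOn (fun s => (uSL ((g 0 0 * s + g 0 1) / (g 1 0 * s + g 1 1)) *
      dSL (-t)) • v) (uIcc 0 1) := hφ.comp_continuousOn fun s hs =>
    (hasDerivAt_mobius g (hpos s hs).ne').continuousAt.continuousWithinAt
  rw [arcAverage, smul_intervalIntegral, ← intervalIntegral.integral_sub
    (hgφ.intervalIntegrable ..) hφσ.intervalIntegrable]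
  refine (intervalIntegral.norm_integral_le_of_norm_le_const (C := ε)
    fun s hs => ?_).trans_eq (by simp)
  have hs' := uIoc_subset_uIcc hs
  rw [smul_smul, mul_uSL_mul_dSL (hpos s hs'), mul_smul, ← smul_sub, norm_isometric_smul,
    ← dist_eq_norm]
  exact hε s hs'

theorem eventually_forall_norm_smul_arcAverage_sub_le (v : V) {ε : ℝ} (hε : 0 < ε) :
    ∀ᶠ g : SL2R in 𝓝 1, ∀ t ≥ 0, ‖g • arcAverage t v - arcAverage t v‖ ≤ ε := by
  obtain ⟨η, hη, hηε⟩ : ∃ η > 0, 3 * ‖v‖ * η ≤ ε / 2 :=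
    (exists_pos_mul_lt (half_pos hε) (3 * ‖v‖)).imp fun _ h => ⟨h.1, h.2.le⟩
  filter_upwards [eventually_forall_mobius_close hη,
    eventually_forall_dist_dSL_mul_vSL_smul_lt v (half_pos hε)] with g hmob hdv t ht
  have htransverse := norm_smul_arcAverage_sub_integral_mobius_le (t := t)
    (fun s hs => (hmob s hs).1)
    fun s hs => (hdv (s, Real.exp (-t)) ⟨hs, (Real.exp_pos _).le, by simpa⟩).le
  have hparam := (norm_integral_mobius_sub_arcAverage_le t v hmob).trans hηε
  exact (norm_sub_le_norm_sub_add_norm_sub ..).trans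
    ((add_le_add htransverse hparam).trans_eq (add_halves ε))

end ArcAverages

section Dynamics

lemma isCompact_closure_range_of_equicontinuous {X ι : Type*} [TopologicalSpace X] [CompactSpace X]
    {F : ι → C(X, ℝ)} {C : ℝ} (hC : ∀ i, ‖F i‖ ≤ C) (hF : Equicontinuous fun i => ⇑(F i)) :
    IsCompact (closure (range F)) := by
  let e := (ContinuousMap.isometryEquivBoundedOfCompact X ℝ).toHomeomorph
  have hcompact : IsCompact (closure (e '' range F)) := by
    refine BoundedContinuousFunction.arzela_ascoli (Icc (-C) C) isCompact_Icc _ ?_ ?_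
    · rintro _ x ⟨_, ⟨i, rfl⟩, rfl⟩
      exact abs_le.1 (((F i).norm_coe_le_norm x).trans (hC i))
    · intro x U hU
      filter_upwards [hF x U hU] with y hy
      rintro ⟨_, _, ⟨i, rfl⟩, rfl⟩
      exact hy i
  rwa [← e.image_closure, e.isCompact_image] at hcompact

/-- Integration against a finite measure on a compact space, as a continuous linear functional on
the continuous functions. -/
noncomputable def integralCLM {X : Type*} [TopologicalSpace X] [CompactSpace X] [MeasurableSpace X]
    [OpensMeasurableSpace X] (μ : Measure X) [IsFiniteMeasure μ] : C(X, ℝ) →L[ℝ] ℝ :=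
  LinearMap.mkContinuous
    { toFun := fun f => ∫ x, f x ∂μ
      map_add' := fun f g => integral_add
        (f.continuous.integrable_of_hasCompactSupport (.of_compactSpace f))
        (g.continuous.integrable_of_hasCompactSupport (.of_compactSpace g))
      map_smul' := fun c f => integral_const_mul c f }
    (μ.real univ)
    fun f => by
      rw [mul_comm]
      exact norm_integral_le_of_norm_le_const (.of_forall f.norm_coe_le_norm)

variable {L K X : Type*} [Group L] [Group K] [TopologicalSpace X] [MulAction L X]
  [ContinuousConstSMul L X] [MulAction K X] [ContinuousConstSMul K X]

/-- The left translation action `(g • f) x = f (g⁻¹ • x)` of a group acting on `X` on the continuous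
functions on `X`. It is only used as a local instance, since it would form a diamond with the
pointwise action when the group also acts on the values. -/
@[reducible]
def translationAction : DistribMulAction L C(X, ℝ) where
  smul g f := f.comp ⟨fun x => g⁻¹ • x, continuous_const_smul g⁻¹⟩
  one_smul f := by
    ext x
    exact congrArg f (by simp)
  mul_smul g h f := by
    ext x
    exact congrArg f (by simp [mul_smul])
  smul_zero _ := rfl
  smul_add _ _ _ := rfl

attribute [local instance] translationAction

lemma translation_apply (g : L) (f : C(X, ℝ)) (x : X) : (g • f) x = f (g⁻¹ • x) := rfl

lemma translation_const (g : L) (c : ℝ) :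
    g • ContinuousMap.const X c = ContinuousMap.const X c := rfl

instance smulCommClass_translation_real : SMulCommClass L ℝ C(X, ℝ) := ⟨fun _ _ _ => rfl⟩

instance smulCommClass_translation [SMulCommClass K L X] : SMulCommClass K L C(X, ℝ) :=
  ⟨fun k g f => by
    ext x
    exact congrArg f (smul_comm _ _ x).symm⟩

lemma eq_const_of_forall_smul_eq [MulAction.IsMinimal L X] {f : C(X, ℝ)} (hf : ∀ g : L, g • f = f)
    (x : X) : f = ContinuousMap.const X (f x) := by
  refine ContinuousMap.coe_injective ((denseRange_smul L x).equalizer f.continuous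
    continuous_const (funext fun g => ?_))
  simpa [translation_apply] using DFunLike.congr_fun (hf g⁻¹) x

variable [CompactSpace X]

instance isIsometricSMul_translation : IsIsometricSMul L C(X, ℝ) :=
  ⟨fun g => Isometry.of_dist_eq fun f f' => by
    simpa only [ContinuousMap.dist_eq_iSup] using!
      (MulAction.toPerm g⁻¹).iSup_comp (g := fun x => dist (f x) (f' x))⟩

instance continuousSMul_translation {M : Type*} [Group M] [TopologicalSpace M] [ContinuousInv M]
    [MulAction M X] [ContinuousSMul M X] : ContinuousSMul M C(X, ℝ) :=
  ⟨ContinuousMap.continuous_of_continuous_uncurry _ <| by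
    change Continuous fun p : (M × C(X, ℝ)) × X => p.1.2 (p.1.1⁻¹ • p.2)
    fun_prop⟩

lemma dist_apply_apply_smul_le (g : L) (f : C(X, ℝ)) (x : X) :
    dist (f x) (f (g • x)) ≤ ‖g⁻¹ • f - f‖ := by
  rw [dist_comm, Real.dist_eq]
  simpa [translation_apply] using (g⁻¹ • f - f).norm_coe_le_norm x

lemma equicontinuous_of_eventually_norm_smul_sub_le [TopologicalSpace L] [TopologicalSpace K]
    [IsTopologicalGroup L] [IsTopologicalGroup K] {ι : Type*} {F : ι → C(X, ℝ)}
    (hopen : ∀ x : X, 𝓝 x ≤ map (fun p : L × K => p.1 • p.2 • x) (𝓝 1))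
    (hL : ∀ ε > 0, ∀ᶠ g : L in 𝓝 1, ∀ i, ‖g • F i - F i‖ ≤ ε)
    (hK : ∀ ε > 0, ∀ᶠ k : K in 𝓝 1, ∀ i, ‖k • F i - F i‖ ≤ ε) :
    Equicontinuous fun i => ⇑(F i) := by
  intro x
  rw [Metric.equicontinuousAt_iff_right]
  intro ε hε
  have hinvL := (tendsto_inv (1 : L)).eventually (by simpa using hL (ε / 3) (by positivity))
  have hinvK := (tendsto_inv (1 : K)).eventually (by simpa using hK (ε / 3) (by positivity))
  refine hopen x (mem_map.2 ?_)
  filter_upwards [hinvL.prod_nhds hinvK] with ⟨g, k⟩ ⟨hg, hk⟩ i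
  have hki := (dist_apply_apply_smul_le k (F i) x).trans (hk i)
  have hgi := (dist_apply_apply_smul_le g (F i) (k • x)).trans (hg i)
  exact (dist_triangle _ (F i (k • x)) _).trans_lt (by linarith)

variable [MeasurableSpace X] [BorelSpace X] {μ : Measure X}

lemma eq_zero_of_integralCLM_sq_eq_zero [IsFiniteMeasure μ] [μ.IsOpenPosMeasure] {f : C(X, ℝ)}
    (hf : integralCLM μ (f ^ 2) = 0) : f = 0 := by
  have hae : ⇑(f ^ 2) =ᵐ[μ] 0 := (integral_eq_zero_iff_of_nonneg (fun x => sq_nonneg (f x))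
    ((f ^ 2).continuous.integrable_of_hasCompactSupport (.of_compactSpace _))).1 hf
  ext x
  exact pow_eq_zero_iff two_ne_zero |>.1
    (congrFun (((f ^ 2).continuous.ae_eq_iff_eq μ continuous_zero).1 hae) x)

lemma integralCLM_translation [IsFiniteMeasure μ] [SMulInvariantMeasure L X μ] (g : L)
    (f : C(X, ℝ)) : integralCLM μ (g • f) = integralCLM μ f :=
  integral_smul_eq_self (g := g⁻¹) f

lemma integralCLM_const [IsProbabilityMeasure μ] (c : ℝ) :
    integralCLM μ (ContinuousMap.const X c) = c := by
  simp [integralCLM]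

section Average

variable [MulAction SL2R X] [ContinuousSMul SL2R X] [SMulInvariantMeasure SL2R X μ]

lemma integralCLM_arcAverage [IsFiniteMeasure μ] (t : ℝ) (f : C(X, ℝ)) :
    integralCLM μ (arcAverage t f) = integralCLM μ f := by
  rw [arcAverage, ← ContinuousLinearMap.intervalIntegral_comp_comm _
    ((continuous_uSL_mul_smul _ f).intervalIntegrable ..)]
  simp [integralCLM_translation]

lemma integralCLM_arcAverage_add_log_two_sq [IsFiniteMeasure μ] (t : ℝ) (f : C(X, ℝ)) :
    integralCLM μ (arcAverage (t + Real.log 2) f ^ 2) = integralCLM μ (arcAverage t f ^ 2) -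
      4⁻¹ * integralCLM μ ((uSL 1 • arcAverage t f - arcAverage t f) ^ 2) := by
  rw [arcAverage_add_log_two]
  set a := arcAverage t f
  have hparallelogram : ((2⁻¹ : ℝ) • (a + uSL 1 • a)) ^ 2 =
      (2⁻¹ : ℝ) • (a ^ 2 + uSL 1 • a ^ 2) - (4⁻¹ : ℝ) • (uSL 1 • a - a) ^ 2 := by
    ext x
    change (2⁻¹ * (a x + (uSL 1 • a) x)) ^ 2 =
      2⁻¹ * (a x ^ 2 + (uSL 1 • a) x ^ 2) - 4⁻¹ * ((uSL 1 • a) x - a x) ^ 2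
    ring
  calc _ = integralCLM μ (dSL (-Real.log 2) • ((2⁻¹ : ℝ) • (a + uSL 1 • a)) ^ 2) := rfl
    _ = _ := by
      rw [integralCLM_translation, hparallelogram]
      simp only [map_sub, map_smul, map_add, integralCLM_translation, smul_eq_mul]
      ring

lemma tendsto_integralCLM_uSL_one_smul_sub_sq [IsFiniteMeasure μ] (f : C(X, ℝ)) :
    Tendsto (fun j : ℕ => integralCLM μ ((uSL 1 • arcAverage (j * Real.log 2) f -
      arcAverage (j * Real.log 2) f) ^ 2)) atTop (𝓝 0) := by
  set Q : ℕ → ℝ := fun j => integralCLM μ (arcAverage (j * Real.log 2) f ^ 2)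
  have hnonneg (g : C(X, ℝ)) : 0 ≤ integralCLM μ (g ^ 2) := integral_nonneg fun x => sq_nonneg (g x)
  have hstep (j : ℕ) : integralCLM μ ((uSL 1 • arcAverage (j * Real.log 2) f -
      arcAverage (j * Real.log 2) f) ^ 2) = 4 * (Q j - Q (j + 1)) := by
    simp only [Q, Nat.cast_add_one, add_one_mul, integralCLM_arcAverage_add_log_two_sq]
    ring
  have hanti : Antitone Q := antitone_nat_of_succ_le fun j => by
    linarith [hstep j, hnonneg (uSL 1 • arcAverage (j * Real.log 2) f -
      arcAverage (j * Real.log 2) f)]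
  have hlim := tendsto_atTop_ciInf hanti ⟨0, forall_mem_range.2 fun j => hnonneg _⟩
  simp only [hstep]
  simpa using (hlim.sub (hlim.comp (tendsto_add_atTop_nat 1))).const_mul 4

variable [IsProbabilityMeasure μ] [μ.IsOpenPosMeasure] [MulAction.IsMinimal SL2R X]

lemma eq_const_of_tendsto_arcAverage {f h : C(X, ℝ)} {ψ : ℕ → ℕ} (hψ : Tendsto ψ atTop atTop)
    (hh : Tendsto (fun j => arcAverage (ψ j * Real.log 2) f) atTop (𝓝 h)) :
    h = ContinuousMap.const X (integralCLM μ f) := by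
  have huh : uSL 1 • h = h := by
    refine sub_eq_zero.1 (eq_zero_of_integralCLM_sq_eq_zero (μ := μ) ?_)
    exact tendsto_nhds_unique ((integralCLM μ).continuous.tendsto _ |>.comp
      (((hh.const_smul (uSL 1)).sub hh).pow 2))
      ((tendsto_integralCLM_uSL_one_smul_sub_sq f).comp hψ)
  have hmean : integralCLM μ h = integralCLM μ f :=
    tendsto_nhds_unique (((integralCLM μ).continuous.tendsto h).comp hh)
      (by simp [Function.comp_def, integralCLM_arcAverage])
  obtain ⟨x⟩ := nonempty_of_isProbabilityMeasure μ
  have hconst := eq_const_of_forall_smul_eq (smul_eq_self_of_uSL_one_smul_eq_self huh) x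
  rw [hconst, integralCLM_const] at hmean
  rwa [hmean] at hconst

variable {G : Type*} [Group G] [TopologicalSpace G] [IsTopologicalGroup G] [MulAction G X]
  [ContinuousSMul G X] [SMulCommClass G SL2R X]

theorem tendsto_arcAverage (hopen : ∀ x : X, 𝓝 x ≤ map (fun p : SL2R × G => p.1 • p.2 • x) (𝓝 1))
    (f : C(X, ℝ)) :
    Tendsto (fun j : ℕ => arcAverage (j * Real.log 2) f) atTop
      (𝓝 (ContinuousMap.const X (integralCLM μ f))) := by
  have hSL : ∀ ε > 0, ∀ᶠ g : SL2R in 𝓝 1, ∀ j : ℕ,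
      ‖g • arcAverage (j * Real.log 2) f - arcAverage (j * Real.log 2) f‖ ≤ ε := fun ε hε =>
    (eventually_forall_norm_smul_arcAverage_sub_le f hε).mono fun g hg j => hg _ (by positivity)
  have hG : ∀ ε > 0, ∀ᶠ k : G in 𝓝 1, ∀ j : ℕ,
      ‖k • arcAverage (j * Real.log 2) f - arcAverage (j * Real.log 2) f‖ ≤ ε := by
    intro ε hε
    have hcont : Continuous fun k : G => ‖k • f - f‖ := by fun_prop
    filter_upwards [(hcont.tendsto' 1 0 (by simp)).eventually_le_const hε] with k hk j
    rw [smul_arcAverage, ← arcAverage_sub]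
    exact (norm_arcAverage_le _ _).trans hk
  have hcompact := isCompact_closure_range_of_equicontinuous
    (fun j : ℕ => norm_arcAverage_le (j * Real.log 2) f)
    (equicontinuous_of_eventually_norm_smul_sub_le hopen hSL hG)
  refine hcompact.tendsto_nhds_of_unique_mapClusterPt
    (.of_forall fun j => subset_closure (mem_range_self j)) fun h _ hh => ?_
  obtain ⟨ψ, hψ, hlim⟩ := hh.tendsto_subseq
  exact eq_const_of_tendsto_arcAverage hψ.tendsto_atTop hlim

theorem tendsto_integral_uSL_two_pow_smul
    (hopen : ∀ x : X, 𝓝 x ≤ map (fun p : SL2R × G => p.1 • p.2 • x) (𝓝 1)) (f : C(X, ℝ)) :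
    Tendsto (fun j : ℕ => ∫ s in (0 : ℝ)..1, uSL (2 ^ j * s) • f) atTop
      (𝓝 (ContinuousMap.const X (integralCLM μ f))) := by
  have hdist (j : ℕ) : dist (∫ s in (0 : ℝ)..1, uSL (2 ^ j * s) • f)
      (ContinuousMap.const X (integralCLM μ f)) =
      dist (arcAverage (j * Real.log 2) f) (ContinuousMap.const X (integralCLM μ f)) := by
    rw [← dist_smul (dSL (j * Real.log 2)) (arcAverage _ _), dSL_smul_arcAverage,
      translation_const, Real.exp_nat_mul, Real.exp_log two_pos]
  rw [tendsto_iff_dist_tendsto_zero]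
  simp only [hdist]
  exact tendsto_iff_dist_tendsto_zero.1 (tendsto_arcAverage hopen f)

lemma integral_eq_integralCLM_of_uSL_invariant
    (hopen : ∀ x : X, 𝓝 x ≤ map (fun p : SL2R × G => p.1 • p.2 • x) (𝓝 1)) {ν : Measure X}
    [IsProbabilityMeasure ν] (hν : ∀ s, MeasurePreserving (fun x : X => uSL s • x) ν ν)
    (f : C(X, ℝ)) : integralCLM ν f = integralCLM μ f := by
  have hinv (s : ℝ) : integralCLM ν (uSL s • f) = integralCLM ν f := by
    have := (hν (-s)).integral_comp' (f := (Homeomorph.smul (uSL (-s))).toMeasurableEquiv) f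
    rwa [uSL_neg] at this
  have havg (j : ℕ) : integralCLM ν (∫ s in (0 : ℝ)..1, uSL (2 ^ j * s) • f) =
      integralCLM ν f := by
    have hcont : Continuous fun s : ℝ => uSL (2 ^ j * s) • f := by fun_prop
    rw [← ContinuousLinearMap.intervalIntegral_comp_comm _ (hcont.intervalIntegrable ..)]
    simp [hinv]
  have hlim := ((integralCLM ν).continuous.tendsto _).comp
    (tendsto_integral_uSL_two_pow_smul (μ := μ) hopen f)
  simp only [Function.comp_def, havg, integralCLM_const] at hlim
  exact tendsto_nhds_unique tendsto_const_nhds hlim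

theorem eq_of_uSL_invariant [HasOuterApproxClosed X]
    (hopen : ∀ x : X, 𝓝 x ≤ map (fun p : SL2R × G => p.1 • p.2 • x) (𝓝 1)) {ν : Measure X}
    [IsProbabilityMeasure ν] (hν : ∀ s, MeasurePreserving (fun x : X => uSL s • x) ν ν) :
    ν = μ :=
  ext_of_forall_integral_eq_of_IsFiniteMeasure fun f =>
    integral_eq_integralCLM_of_uSL_invariant hopen hν f.toContinuousMap

include μ in
theorem denseRange_uSL_smul [T2Space X]
    (hopen : ∀ x : X, 𝓝 x ≤ map (fun p : SL2R × G => p.1 • p.2 • x) (𝓝 1)) (x : X) :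
    DenseRange fun s => uSL s • x := by
  by_contra hdense
  obtain ⟨y, hy⟩ := not_forall.1 hdense
  obtain ⟨f, hf0, hf1, hf⟩ := exists_continuous_zero_one_of_isClosed isClosed_closure
    isClosed_singleton (disjoint_singleton_right.2 hy)
  have hzero (j : ℕ) : (∫ s in (0 : ℝ)..1, uSL (2 ^ j * s) • f) x = 0 := by
    have hcont : Continuous fun s : ℝ => uSL (2 ^ j * s) • f := by fun_prop
    have horbit (s : ℝ) : (uSL s • f) x = 0 := by
      rw [translation_apply, ← uSL_neg]
      exact hf0 (subset_closure (mem_range_self (-s)))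
    have := ContinuousLinearMap.intervalIntegral_comp_comm (ContinuousMap.evalCLM ℝ x)
      (hcont.intervalIntegrable (μ := volume) 0 1)
    simpa [horbit] using this.symm
  have hlim := ((ContinuousMap.evalCLM ℝ x).continuous.tendsto _).comp
    (tendsto_integral_uSL_two_pow_smul (μ := μ) hopen f)
  have hint : ∫ x, f x ∂μ = 0 :=
    (tendsto_nhds_unique (tendsto_const_nhds.congr fun j => (hzero j).symm) hlim).symm
  have hpos : 0 < ∫ x, f x ∂μ := f.continuous.integral_pos_of_hasCompactSupport_nonneg_nonzero
    (.of_compactSpace f) (fun z => (hf z).1) (x := y) (by simp [hf1 rfl])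
  exact hpos.ne' hint

end Average

end Dynamics

section FundamentalSet

lemma exists_measurableSet_existsUnique_smul_mem {Γ X : Type*} [Group Γ] [Countable Γ]
    [MeasurableSpace X] [MulAction Γ X] [MeasurableConstSMul Γ X] {U : ℕ → Set X}
    (hU : ∀ i, MeasurableSet (U i)) (hcover : ∀ x, ∃ i, x ∈ U i)
    (hinj : ∀ i (γ : Γ), ∀ x ∈ U i, γ • x ∈ U i → γ = 1) :
    ∃ D : Set X, MeasurableSet D ∧ ∀ x, ∃! γ : Γ, γ • x ∈ D := by
  classical
  have hex (x : X) : ∃ i, ∃ γ : Γ, γ • x ∈ U i := (hcover x).imp fun i hi => ⟨1, by simpa⟩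
  let D : Set X := ⋃ i, U i ∩ ⋂ j, ⋂ (_ : j < i), ⋂ γ : Γ, (γ • ·) ⁻¹' (U j)ᶜ
  have hD {x : X} : x ∈ D ↔ ∃ i, x ∈ U i ∧ ∀ j < i, ∀ γ : Γ, γ • x ∉ U j := by simp [D]
  refine ⟨D, .iUnion fun i => (hU i).inter (.iInter fun j => .iInter fun _ => .iInter fun γ =>
    measurable_const_smul γ (hU j).compl), fun x => ?_⟩
  obtain ⟨γ, hγ⟩ := Nat.find_spec (hex x)
  refine ⟨γ, hD.2 ⟨_, hγ, fun j hj δ hδ => Nat.find_min (hex x) hj ⟨δ * γ, ?_⟩⟩, fun δ hδ => ?_⟩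
  · rwa [mul_smul]
  · obtain ⟨i, hi, hmin⟩ := hD.1 hδ
    have hle : i ≤ Nat.find (hex x) := not_lt.1 fun hlt =>
      hmin _ hlt (γ * δ⁻¹) (by simpa [mul_smul] using hγ)
    obtain rfl : i = Nat.find (hex x) := hle.antisymm (Nat.find_min' _ ⟨δ, hi⟩)
    exact mul_inv_eq_one.1 (hinj _ (δ * γ⁻¹) _ hγ (by simpa [mul_smul] using hi))

variable {H : Type*} [Group H] [TopologicalSpace H] [IsTopologicalGroup H] (Γ : Subgroup H)
  [DiscreteTopology Γ]

lemma exists_isOpen_one_mem_smul_mem_imp_eq_one :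
    ∃ W : Set H, IsOpen W ∧ 1 ∈ W ∧ ∀ γ : Γ, ∀ y, ∀ x ∈ W, (γ • (x * y)) * y⁻¹ ∈ W → γ = 1 := by
  obtain ⟨O, hO, hOΓ⟩ := (mem_nhds_subtype _ _ _).1 ((isOpen_discrete {(1 : Γ)}).mem_nhds rfl)
  obtain ⟨V, hV, hVO⟩ := exists_nhds_split_inv hO
  obtain ⟨W, hWV, hW, hWone⟩ := mem_nhds_iff.1 hV
  refine ⟨W, hW, hWone, fun γ y x hx hγ => hOΓ ?_⟩
  simpa [Subgroup.smul_def, mul_assoc] using hVO _ (hWV hγ) _ (hWV hx)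

lemma exists_measurableSet_existsUnique_subgroup_smul_mem [SecondCountableTopology H]
    [MeasurableSpace H] [BorelSpace H] :
    ∃ D : Set H, MeasurableSet D ∧ ∀ x, ∃! γ : Γ, γ • x ∈ D := by
  have : Countable Γ := TopologicalSpace.separableSpace_iff_countable.1 inferInstance
  obtain ⟨W, hW, hWone, hWΓ⟩ := exists_isOpen_one_mem_smul_mem_imp_eq_one Γ
  let d := TopologicalSpace.denseSeq H
  refine exists_measurableSet_existsUnique_smul_mem (U := fun i => (· * (d i)⁻¹) ⁻¹' W)
    (fun i => (hW.preimage (continuous_mul_const _)).measurableSet) (fun x => ?_)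
    fun i γ x hx hγ => hWΓ γ (d i) (x * (d i)⁻¹) hx (by simpa using hγ)
  have hopen : IsOpen {y : H | x * y⁻¹ ∈ W} := hW.preimage (by fun_prop)
  exact (TopologicalSpace.denseRange_denseSeq H).exists_mem_open hopen ⟨x, by simpa⟩

end FundamentalSet

section CosetSpace

open scoped Pointwise

variable {H : Type*} [Group H] {Γ : Subgroup H}

/-- The action `h • Γx = Γxh⁻¹` of `H` on `Γ\H`. The inverse turns right translations into a left
action. -/
instance : MulAction H (Quotient (rightRel Γ)) where
  smul h := rightMulQuot Γ h⁻¹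
  one_smul := by
    rintro ⟨x⟩
    exact congrArg (Quotient.mk _) (by simp : x * 1⁻¹ = x)
  mul_smul g h := by
    rintro ⟨x⟩
    exact congrArg (Quotient.mk _) (by simp [mul_assoc] : x * (g * h)⁻¹ = x * h⁻¹ * g⁻¹)

lemma inv_smul_eq_rightMulQuot (h : H) (p : Quotient (rightRel Γ)) :
    h⁻¹ • p = rightMulQuot Γ h p :=
  congrArg (rightMulQuot Γ · p) (inv_inv h)

lemma smul_mk (h x : H) :
    h • (Quotient.mk _ x : Quotient (rightRel Γ)) = Quotient.mk _ (x * h⁻¹) := rfl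

lemma mk_subgroup_smul (γ : Γ) (x : H) :
    Quotient.mk (rightRel Γ) (γ • x) = Quotient.mk (rightRel Γ) x :=
  Quotient.sound ⟨γ, rfl⟩

variable [TopologicalSpace H] [IsTopologicalGroup H]

lemma isOpenQuotientMap_mk_rightRel : IsOpenQuotientMap (Quotient.mk (rightRel Γ)) :=
  MulAction.isOpenQuotientMap_quotientMk (Γ := Γ) (T := H)

instance : ContinuousSMul H (Quotient (rightRel Γ)) where
  continuous_smul := by
    refine ((IsOpenQuotientMap.id.prodMap isOpenQuotientMap_mk_rightRel).continuous_comp_iff).1 ?_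
    have : Continuous fun z : H × H => z.2 * z.1⁻¹ := by fun_prop
    exact isOpenQuotientMap_mk_rightRel.continuous.comp this

lemma isOpenMap_smul_right (p : Quotient (rightRel Γ)) : IsOpenMap fun h : H => h • p := by
  obtain ⟨x, rfl⟩ := Quotient.exists_rep p
  exact isOpenQuotientMap_mk_rightRel.isOpenMap.comp
    ((isOpenMap_mul_left x).comp (Homeomorph.inv H).isOpenMap)

instance [T2Space H] [LocallyCompactSpace H] [DiscreteTopology Γ] :
    T2Space (Quotient (rightRel Γ)) :=
  haveI := Γ.properlyDiscontinuousSMul_of_tendsto_cofinite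
    (Γ.tendsto_coe_cofinite_of_discrete (isDiscrete_iff_discreteTopology.2 inferInstance))
  t2Space_of_properlyDiscontinuousSMul_of_t2Space (Γ := Γ) (T := H)

instance [SecondCountableTopology H] : SecondCountableTopology (Quotient (rightRel Γ)) :=
  ContinuousConstSMul.secondCountableTopology (Γ := Γ) (T := H)

instance : BorelSpace (Quotient (rightRel Γ)) := ⟨rfl⟩

variable (Γ) in
lemma exists_isCompact_forall_exists_smul_mem [LocallyCompactSpace H]
    [CompactSpace (Quotient (rightRel Γ))] :
    ∃ K : Set H, IsCompact K ∧ ∀ x, ∃ γ : Γ, γ • x ∈ K := by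
  choose N hN hxN using fun x : H => exists_compact_mem_nhds x
  obtain ⟨t, -, ht⟩ := (isCompact_univ (X := Quotient (rightRel Γ))).elim_nhds_subcover
    (fun p => Quotient.mk (rightRel Γ) '' N p.out) fun p _ => by
      have := (isOpenQuotientMap_mk_rightRel (Γ := Γ)).isOpenMap.image_mem_nhds (hxN p.out)
      rwa [Quotient.out_eq] at this
  refine ⟨⋃ p ∈ t, N p.out, t.isCompact_biUnion fun p _ => hN _, fun x => ?_⟩
  obtain ⟨p, hp, y, hy, hyx⟩ := mem_iUnion₂.1 (ht (mem_univ (Quotient.mk (rightRel Γ) x)))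
  obtain ⟨γ, rfl⟩ : ∃ γ : Γ, γ • x = y := Quotient.exact hyx
  exact ⟨γ, mem_biUnion hp hy⟩

variable [MeasurableSpace H]

variable (Γ) in
/-- The measure on `Γ\H` induced by a measure on `H`, where `D` is a fundamental domain for the
left action of `Γ` on `H`. -/
noncomputable def quotientMeasure (m : Measure H) (D : Set H) : Measure (Quotient (rightRel Γ)) :=
  (m.restrict D).map (Quotient.mk _)

variable [BorelSpace H] {m : Measure H} {D : Set H}

lemma measurable_mk_rightRel : Measurable (Quotient.mk (rightRel Γ)) :=
  isOpenQuotientMap_mk_rightRel.continuous.measurable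

lemma quotientMeasure_apply {B : Set (Quotient (rightRel Γ))} (hB : MeasurableSet B) :
    quotientMeasure Γ m D B = m (Quotient.mk _ ⁻¹' B ∩ D) := by
  rw [quotientMeasure, Measure.map_apply measurable_mk_rightRel hB,
    Measure.restrict_apply (measurable_mk_rightRel hB)]

lemma isFundamentalDomain_preimage_mul_right (hD : MeasurableSet D)
    (hDΓ : ∀ x, ∃! γ : Γ, γ • x ∈ D) (h : H) : IsFundamentalDomain Γ ((· * h) ⁻¹' D) m :=
  .mk' (measurable_mul_const h hD).nullMeasurableSet fun x => by
    simpa only [mem_preimage, smul_mul_assoc] using hDΓ (x * h)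

section Countable

variable [Countable Γ] [m.IsMulLeftInvariant]

lemma measure_lt_top_of_isFundamentalDomain [IsFiniteMeasureOnCompacts m] [LocallyCompactSpace H]
    [CompactSpace (Quotient (rightRel Γ))] (hD : IsFundamentalDomain Γ D m) : m D < ⊤ := by
  obtain ⟨K, hK, hKΓ⟩ := exists_isCompact_forall_exists_smul_mem Γ
  calc m D ≤ m (⋃ γ : Γ, γ • K ∩ D) := measure_mono fun x hx => by
          obtain ⟨γ, hγ⟩ := hKΓ x
          exact mem_iUnion.2 ⟨γ⁻¹, mem_smul_set_iff_inv_smul_mem.2 (by simpa using hγ), hx⟩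
    _ ≤ ∑' γ : Γ, m (γ • K ∩ D) := measure_iUnion_le _
    _ = m K := (hD.measure_eq_tsum K).symm
    _ < ⊤ := hK.measure_lt_top

lemma isOpenPosMeasure_quotientMeasure [m.IsOpenPosMeasure] (hD : IsFundamentalDomain Γ D m) :
    (quotientMeasure Γ m D).IsOpenPosMeasure where
  open_pos B hB hne hzero := by
    rw [quotientMeasure_apply hB.measurableSet] at hzero
    refine (hB.preimage isOpenQuotientMap_mk_rightRel.continuous).measure_ne_zero m
      (hne.preimage isOpenQuotientMap_mk_rightRel.surjective)
      (hD.measure_zero_of_invariant _ (fun γ => ?_) hzero)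
    ext x
    simp [mem_smul_set_iff_inv_smul_mem, mk_subgroup_smul]

end Countable

section Haar

variable [LocallyCompactSpace H] [CompactSpace (Quotient (rightRel Γ))] [Countable Γ]
  [m.IsHaarMeasure] [m.InnerRegular]

-- The preimage of a fundamental domain under a right translation is again a fundamental domain,
-- hence has the same finite positive measure; so the modular character is trivial.
lemma measurePreserving_mul_right_of_isFundamentalDomain (hD : MeasurableSet D)
    (hDΓ : ∀ x, ∃! γ : Γ, γ • x ∈ D) (h : H) : MeasurePreserving (· * h) m m := by
  have hfd : IsFundamentalDomain Γ D m := .mk' hD.nullMeasurableSet hDΓ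
  have hmap := Measure.map_right_mul_eq_modularCharacterFun_smul m h
  have hchar : (Measure.modularCharacterFun h : ENNReal) * m D = m D := by
    calc (Measure.modularCharacterFun h : ENNReal) * m D = Measure.map (· * h) m D := by
          rw [hmap]; rfl
      _ = m ((· * h) ⁻¹' D) := Measure.map_apply (measurable_mul_const h) hD
      _ = m D := (isFundamentalDomain_preimage_mul_right hD hDΓ h).measure_eq hfd
  have hone : (Measure.modularCharacterFun h : ENNReal) = 1 :=
    (ENNReal.mul_eq_right (hfd.measure_ne_zero (NeZero.ne m))
      (measure_lt_top_of_isFundamentalDomain hfd).ne).1 hchar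
  exact ⟨measurable_mul_const h, by rw [hmap, ENNReal.coe_eq_one.1 hone, one_smul]⟩

lemma smulInvariantMeasure_quotientMeasure (hD : MeasurableSet D)
    (hDΓ : ∀ x, ∃! γ : Γ, γ • x ∈ D) :
    SMulInvariantMeasure H (Quotient (rightRel Γ)) (quotientMeasure Γ m D) where
  measure_preimage_smul h B hB := by
    have hmp : MeasurePreserving (· * h⁻¹) m m :=
      measurePreserving_mul_right_of_isFundamentalDomain hD hDΓ h⁻¹
    have hB' : MeasurableSet (Quotient.mk (rightRel Γ) ⁻¹' B) := measurable_mk_rightRel hB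
    have hhB := (continuous_const_smul h).measurable hB
    rw [quotientMeasure_apply hhB, quotientMeasure_apply hB,
      ← hmp.measure_preimage (hB'.inter hD).nullMeasurableSet, preimage_inter]
    refine IsFundamentalDomain.measure_set_eq (.mk' hD.nullMeasurableSet hDΓ)
      (isFundamentalDomain_preimage_mul_right hD hDΓ h⁻¹) (measurable_mk_rightRel hhB) fun γ => ?_
    ext x
    simp [mk_subgroup_smul]

end Haar

variable (Γ) in
theorem exists_isProbabilityMeasure_smulInvariantMeasure [SecondCountableTopology H]
    [LocallyCompactSpace H] [DiscreteTopology Γ] [CompactSpace (Quotient (rightRel Γ))] :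
    ∃ μ : Measure (Quotient (rightRel Γ)),
      IsProbabilityMeasure μ ∧ μ.IsOpenPosMeasure ∧
        SMulInvariantMeasure H (Quotient (rightRel Γ)) μ := by
  have : Countable Γ := TopologicalSpace.separableSpace_iff_countable.1 inferInstance
  obtain ⟨D, hD, hDΓ⟩ := exists_measurableSet_existsUnique_subgroup_smul_mem Γ
  have hfd : IsFundamentalDomain Γ D (Measure.haar : Measure H) := .mk' hD.nullMeasurableSet hDΓ
  let μ := quotientMeasure Γ Measure.haar D
  have : μ.IsOpenPosMeasure := isOpenPosMeasure_quotientMeasure hfd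
  have : SMulInvariantMeasure H (Quotient (rightRel Γ)) μ :=
    smulInvariantMeasure_quotientMeasure hD hDΓ
  have : IsFiniteMeasure μ := ⟨by
    simpa [μ, quotientMeasure_apply] using measure_lt_top_of_isFundamentalDomain hfd⟩
  have : Nonempty (Quotient (rightRel Γ)) := ⟨Quotient.mk _ 1⟩
  exact ⟨(μ univ)⁻¹ • μ, inferInstance, Measure.isOpenPosMeasure_smul μ (by simp), inferInstance⟩

end CosetSpace

section Product

instance : IsClosed (Subgroup.center SL2R : Set SL2R) := by
  have hcenter : (Subgroup.center SL2R : Set SL2R) = ⋂ g : SL2R, {h | g * h = h * g} := by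
    ext h
    simp [Subgroup.mem_center_iff]
  rw [hcenter]
  exact isClosed_iInter fun g => isClosed_eq (by fun_prop) (by fun_prop)

variable {G : Type*} [Group G]

variable (G) in
/-- The homomorphism `g ↦ (±g, 1)` from `SL(2,ℝ)` onto the first factor of `PSL(2,ℝ) × G`. -/
def toFirstFactor : SL2R →* PSL2R × G :=
  (MonoidHom.inl PSL2R G).comp (QuotientGroup.mk' (Subgroup.center SL2R))

variable {Γ : Subgroup (PSL2R × G)}

/-- The action of `SL(2,ℝ)` on `Γ\(PSL(2,ℝ) × G)` by inverse right translations in the first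
factor. -/
@[reducible]
def firstFactorAction : MulAction SL2R (Quotient (rightRel Γ)) :=
  .compHom _ (toFirstFactor G)

/-- The action of `G` on `Γ\(PSL(2,ℝ) × G)` by inverse right translations in the second factor. -/
@[reducible]
def secondFactorAction : MulAction G (Quotient (rightRel Γ)) :=
  .compHom _ (MonoidHom.inr PSL2R G)

attribute [local instance] firstFactorAction secondFactorAction

lemma firstFactor_smul_eq (g : SL2R) (p : Quotient (rightRel Γ)) :
    g • p = ((g : PSL2R), (1 : G)) • p := rfl

lemma secondFactor_smul_eq (k : G) (p : Quotient (rightRel Γ)) : k • p = ((1 : PSL2R), k) • p := rfl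

lemma rightMulQuot_uPSL (s : ℝ) (p : Quotient (rightRel Γ)) :
    rightMulQuot Γ (uPSL s, 1) p = uSL (-s) • p := by
  rw [uSL_neg, ← inv_smul_eq_rightMulQuot, firstFactor_smul_eq]
  simp [uPSL]

lemma mem_orbit_mk (x y : PSL2R) (k : G) :
    Quotient.mk (rightRel Γ) (y, k) ∈ MulAction.orbit SL2R (Quotient.mk (rightRel Γ) (x, k)) := by
  obtain ⟨g, hg⟩ := QuotientGroup.mk_surjective (y⁻¹ * x)
  refine ⟨g, ?_⟩
  change g • Quotient.mk (rightRel Γ) (x, k) = _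
  rw [firstFactor_smul_eq, hg, smul_mk]
  simp

instance : SMulCommClass G SL2R (Quotient (rightRel Γ)) where
  smul_comm k g p := by simp [firstFactor_smul_eq, secondFactor_smul_eq, smul_smul]

variable [TopologicalSpace G]

instance {μ : Measure (Quotient (rightRel Γ))}
    [SMulInvariantMeasure (PSL2R × G) (Quotient (rightRel Γ)) μ] :
    SMulInvariantMeasure SL2R (Quotient (rightRel Γ)) μ where
  measure_preimage_smul g _ hs :=
    SMulInvariantMeasure.measure_preimage_smul ((g : PSL2R), (1 : G)) hs

variable [IsTopologicalGroup G]

instance : ContinuousSMul SL2R (Quotient (rightRel Γ)) :=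
  MulAction.continuousSMul_compHom (f := toFirstFactor G)
    (QuotientGroup.continuous_mk.prodMk continuous_const)

instance : ContinuousSMul G (Quotient (rightRel Γ)) :=
  MulAction.continuousSMul_compHom (f := MonoidHom.inr PSL2R G)
    (continuous_const.prodMk continuous_id)

lemma nhds_le_map_smul_smul (p : Quotient (rightRel Γ)) :
    𝓝 p ≤ map (fun z : SL2R × G => z.1 • z.2 • p) (𝓝 1) := by
  have hmk : IsOpenMap (Prod.map ((↑) : SL2R → PSL2R) (id : G → G)) :=
    QuotientGroup.isOpenMap_coe.prodMap .id
  have hopen : IsOpenMap fun z : SL2R × G => z.1 • z.2 • p := by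
    convert (isOpenMap_smul_right p).comp hmk with z
    rw [firstFactor_smul_eq, secondFactor_smul_eq, smul_smul, Prod.mk_mul_mk, mul_one, one_mul]
    rfl
  simpa using hopen.nhds_le 1

lemma isMinimal_of_dense_image_snd (hdense : Dense (Prod.snd '' (Γ : Set (PSL2R × G)))) :
    MulAction.IsMinimal SL2R (Quotient (rightRel Γ)) where
  dense_orbit p := by
    obtain ⟨⟨x, k⟩, rfl⟩ := Quotient.exists_rep p
    have hdense_mul : Dense ((· * k) '' (Prod.snd '' (Γ : Set (PSL2R × G)))) :=
      (Equiv.mulRight k).surjective.denseRange.dense_image (continuous_mul_const k) hdense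
    refine (isOpenQuotientMap_mk_rightRel.surjective.denseRange.dense_image
      isOpenQuotientMap_mk_rightRel.continuous (dense_univ.prod hdense_mul)).mono ?_
    rintro _ ⟨⟨y, _⟩, ⟨-, _, ⟨γ, hγ, rfl⟩, rfl⟩, rfl⟩
    have hmk := mk_subgroup_smul ⟨γ, hγ⟩ (γ.1⁻¹ * y, k)
    rw [Subgroup.smul_def, smul_eq_mul, Prod.mul_def, mul_inv_cancel_left] at hmk
    exact hmk ▸ mem_orbit_mk x _ k

variable (Γ) in
theorem _root_.horocycle_flow_strictly_ergodic_homogeneous_general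
    [SecondCountableTopology G] [LocallyCompactSpace G] [T2Space G] [DiscreteTopology Γ]
    [CompactSpace (Quotient (rightRel Γ))]
    (hdense : Dense (Prod.snd '' (Γ : Set (PSL2R × G)))) :
    (∀ p : Quotient (rightRel Γ), Dense (range fun s : ℝ => rightMulQuot Γ (uPSL s, 1) p)) ∧
    ∃! μ : Measure (Quotient (rightRel Γ)),
      IsProbabilityMeasure μ ∧ ∀ s : ℝ, Measure.map (rightMulQuot Γ (uPSL s, 1)) μ = μ := by
  have := isMinimal_of_dense_image_snd hdense
  let : MeasurableSpace (PSL2R × G) := borel _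
  have : BorelSpace (PSL2R × G) := ⟨rfl⟩
  obtain ⟨μ, hμ, hpos, hinv⟩ := exists_isProbabilityMeasure_smulInvariantMeasure Γ
  have hflow (s : ℝ) : rightMulQuot Γ (uPSL s, 1) = fun p => uSL (-s) • p :=
    funext (rightMulQuot_uPSL s)
  simp only [hflow]
  refine ⟨fun p => ?_, μ, ⟨hμ, fun s => MeasureTheory.map_smul (uSL (-s)) μ⟩, fun ν ⟨hν, hνi⟩ => ?_⟩
  · have hdense_orbit := denseRange_uSL_smul (μ := μ) nhds_le_map_smul_smul p
    exact hdense_orbit.comp neg_surjective.denseRange (by fun_prop)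
  · refine eq_of_uSL_invariant nhds_le_map_smul_smul fun s => ⟨measurable_const_smul _, ?_⟩
    simpa using hνi (-s)

end Product

end Horocycle

theorem horocycle_flow_strictly_ergodic_homogeneous
    {E : Type*} [NormedAddCommGroup E] [NormedSpace ℝ E] [FiniteDimensional ℝ E]
    {G : Type*} [Group G] [TopologicalSpace G] [ChartedSpace E G]
    [LieGroup (modelWithCornersSelf ℝ E) (⊤ : ℕ∞) G] [SecondCountableTopology G]
    (Γ : Subgroup (PSL2R × G)) [DiscreteTopology Γ]
    [CompactSpace (Quotient (QuotientGroup.rightRel Γ))]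
    (hdense : Dense (Prod.snd '' (Γ : Set (PSL2R × G)))) :
    (∀ p : Quotient (QuotientGroup.rightRel Γ),
        Dense (Set.range fun s : ℝ => rightMulQuot Γ (uPSL s, 1) p)) ∧
    (∃! μ : Measure (Quotient (QuotientGroup.rightRel Γ)),
        IsProbabilityMeasure μ ∧
        ∀ s : ℝ, Measure.map (rightMulQuot Γ (uPSL s, 1)) μ = μ) := by
  have : IsTopologicalGroup G :=
    topologicalGroup_of_lieGroup (modelWithCornersSelf ℝ E) (⊤ : ℕ∞)
  have : T1Space G := ChartedSpace.t1Space E G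
  have : LocallyCompactSpace G := ChartedSpace.locallyCompactSpace E G
  exact horocycle_flow_strictly_ergodic_homogeneous_general Γ hdense
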